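/- arXiv:2509.18837 — 2 statements merged into one kernel-verified Lean document; each statement's English description precedes it below -/
import Mathlib

section
/- For H in (0,1), the identity (1/(2H)) + ∫₁^∞ (u^(H-1/2) - (u-1)^(H-1/2))² du = Γ(H+1/2)² / (2H sin(πH) Γ(2H)) holds. -/
open Real MeasureTheory Set

lemma aux_int (a : ℝ) (h0 : -(1/2) < a) (h1 : a < 1/2) :
    IntervalIntegrable (fun x : ℝ => x ^ a * (1 - x) ^ (-2*a)) volume 0 1 ∧
    ∫ x in (0:ℝ)..1, x ^ a * (1 - x) ^ (-2*a)
      = Real.Gamma (a+1) * Real.Gamma (1-2*a) / Real.Gamma (2 - a) := by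
  have key : ∀ x ∈ Icc (0:ℝ) 1, (x:ℂ) ^ (((a+1 : ℝ):ℂ) - 1) * (1 - (x:ℂ)) ^ (((1-2*a : ℝ):ℂ) - 1)
      = ((x ^ a * (1 - x) ^ (-2*a) : ℝ) : ℂ) := by
    intro x hx
    rw [Complex.ofReal_mul, Complex.ofReal_cpow hx.1, Complex.ofReal_cpow (by linarith [hx.2])]
    push_cast
    ring_nf
  have hc := Complex.betaIntegral_convergent (u := ((a+1 : ℝ):ℂ)) (v := ((1-2*a : ℝ):ℂ))
    (by rw [Complex.ofReal_re]; linarith) (by rw [Complex.ofReal_re]; linarith)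
  have hb := ProbabilityTheory.beta_eq_betaIntegralReal (a+1) (1-2*a) (by linarith) (by linarith)
  constructor
  · rw [intervalIntegrable_iff_integrableOn_Ioc_of_le zero_le_one] at hc ⊢
    have := hc.re
    refine this.congr ?_
    refine (ae_restrict_iff' measurableSet_Ioc).2 (Filter.Eventually.of_forall fun x hx => ?_)
    simp only []
    rw [key x ⟨hx.1.le, hx.2⟩]
    simp
  · rw [Complex.betaIntegral, intervalIntegral.integral_congr (g := fun x => ((x ^ a * (1 - x) ^ (-2*a) : ℝ) : ℂ)),
      intervalIntegral.integral_ofReal, Complex.ofReal_re, ProbabilityTheory.beta] at hb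
    · rw [← hb]; congr 2; ring
    · intro x hx
      rw [uIcc_of_le zero_le_one] at hx
      exact key x hx

lemma aux_deriv (a u : ℝ) (h0 : -(1/2) < a) (hu : 1 < u) :
    HasDerivAt (fun u : ℝ => ((u-1)^(2*a+1) + u^(2*a+1) - 2*((u-1)^(a+1) * u^a)
        - (u-1)^(a+1) * u^(a-1)) / (2*a+1))
      ((u ^ a - (u-1)^a)^2 - (1-a)/(2*a+1) * ((u-1)^a * u^(a-2))) u := by
  have hv : 0 < u - 1 := by linarith
  have hu0 : 0 < u := by linarith
  have d1 : ∀ p : ℝ, HasDerivAt (fun u : ℝ => (u-1)^p) (p * (u-1)^(p-1)) u := fun p => by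
    simpa using ((hasDerivAt_id u).sub_const 1).rpow_const (p := p) (Or.inl hv.ne')
  have d2 : ∀ p : ℝ, HasDerivAt (fun u : ℝ => u^p) (p * u^(p-1)) u := fun p => by
    simpa using (hasDerivAt_id u).rpow_const (p := p) (Or.inl hu0.ne')
  have := ((((d1 (2*a+1)).add (d2 (2*a+1))).sub (((d1 (a+1)).mul (d2 a)).const_mul 2)).sub
    ((d1 (a+1)).mul (d2 (a-1)))).div_const (2*a+1)
  refine this.congr_deriv ?_
  have e1 : ∀ x : ℝ, 0 < x → x^(2*a+1-1) = x^a * x^a := fun x hx => by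
    rw [← rpow_add hx]; ring_nf
  have e2 : ∀ x : ℝ, 0 < x → x^(a+1) = x^a * x := fun x hx => by
    rw [rpow_add hx, rpow_one]
  have e3 : u^(a-1) = u^a / u := by rw [rpow_sub hu0, rpow_one]
  have e4 : u^(a-2) = u^a / u^2 := by rw [rpow_sub hu0]; norm_cast
  have e5 : u^(a-1-1) = u^a / u^2 := by rw [← e4]; ring_nf
  have e6 : (u-1)^(a+1-1) = (u-1)^a := by ring_nf
  rw [e1 _ hv, e1 _ hu0, e6, e2 _ hv, e5, e3, e4]
  have : 2*a+1 ≠ 0 := by linarith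
  field_simp
  ring

lemma aux_phi (a : ℝ) (h0 : -(1/2) < a) (h1 : a < 1/2) :
    Filter.Tendsto (fun y : ℝ => ((1-y)^(2*a+1) + 1 - (1-y)^(a+1) * (2+y)) / y^(2*a+1))
      (nhdsWithin 0 (Ioi 0)) (nhds 0) := by
  have d1 : ∀ p y : ℝ, y < 1 → HasDerivAt (fun u : ℝ => (1-u)^p) (-(p * (1-y)^(p-1))) y := by
    intro p y hy
    have := ((hasDerivAt_id y).const_sub 1).rpow_const (p := p) (Or.inl (by simp; linarith))
    simpa using this
  have ev1 : ∀ᶠ y : ℝ in nhdsWithin 0 (Ioi 0), y < 1 :=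
    nhdsWithin_le_nhds (Iio_mem_nhds one_pos)
  have ev0 : ∀ᶠ y : ℝ in nhdsWithin 0 (Ioi 0), 0 < y := self_mem_nhdsWithin
  have d3 : ∀ y : ℝ, y < 1 → HasDerivAt
      (fun y : ℝ => ((1-y)^(2*a+1) + 1 - (1-y)^(a+1) * (2+y)))
      (-((2*a+1) * (1-y)^(2*a+1-1)) - (-((a+1) * (1-y)^(a+1-1)) * (2+y) + (1-y)^(a+1) * 1)) y := by
    intro y hy
    exact ((d1 (2*a+1) y hy).add_const 1).sub
      ((d1 (a+1) y hy).mul ((hasDerivAt_id y).const_add 2))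
  refine HasDerivAt.lhopital_zero_nhdsGT
    (f' := fun y => (-((2*a+1) * (1-y)^(2*a+1-1)) - (-((a+1) * (1-y)^(a+1-1)) * (2+y) + (1-y)^(a+1) * 1)))
    (g' := fun y => (2*a+1) * y^(2*a+1-1)) ?_ ?_ ?_ ?_ ?_ ?_
  · filter_upwards [ev1] with y hy using d3 y hy
  · filter_upwards [ev0] with y hy
    exact Real.hasDerivAt_rpow_const (Or.inl hy.ne')
  · filter_upwards [ev0] with y hy
    have : 0 < 2*a+1 := by linarith
    positivity
  · have := (d3 0 one_pos).continuousAt.tendsto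
    refine (this.mono_left nhdsWithin_le_nhds).trans (le_of_eq ?_)
    norm_num
  · have : ContinuousAt (fun y : ℝ => y^(2*a+1)) 0 :=
      Real.continuousAt_rpow_const _ _ (Or.inr (by linarith))
    refine (this.tendsto.mono_left nhdsWithin_le_nhds).trans (le_of_eq ?_)
    rw [zero_rpow (by linarith)]
  · have dd : DifferentiableAt ℝ (fun y : ℝ => (-((2*a+1) * (1-y)^(2*a+1-1)) - (-((a+1) * (1-y)^(a+1-1)) * (2+y) + (1-y)^(a+1) * 1))) 0 := by
      have q := fun p => (d1 p 0 one_pos).differentiableAt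
      have q1 := q (2*a+1-1)
      have q2 := q (a+1-1)
      have q3 := q (a+1)
      fun_prop
    have s := dd.hasDerivAt.tendsto_slope_zero_right
    have c : Filter.Tendsto (fun y : ℝ => y^(1-2*a)) (nhdsWithin 0 (Ioi 0)) (nhds 0) := by
      have : ContinuousAt (fun y : ℝ => y^(1-2*a)) 0 :=
        Real.continuousAt_rpow_const _ _ (Or.inr (by linarith))
      refine (this.tendsto.mono_left nhdsWithin_le_nhds).trans (le_of_eq ?_)
      rw [zero_rpow (by linarith)]
    have m := (s.mul c).div_const (2*a+1)
    rw [mul_zero, zero_div] at m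
    refine m.congr' ?_
    filter_upwards [ev0] with y hy
    have e : y^(2*a+1-1) = y / y^(1-2*a) := by
      rw [eq_div_iff (by positivity), ← rpow_add hy]; ring_nf; simp
    have : 2*a+1 ≠ 0 := by linarith
    have : y^(1-2*a) ≠ 0 := by positivity
    simp only [e, smul_eq_mul, zero_add, sub_zero, one_rpow]
    field_simp
    ring

lemma aux_lim (a : ℝ) (h0 : -(1/2) < a) (h1 : a < 1/2) :
    Filter.Tendsto (fun u : ℝ => ((u-1)^(2*a+1) + u^(2*a+1) - 2*((u-1)^(a+1) * u^a)
        - (u-1)^(a+1) * u^(a-1)) / (2*a+1)) Filter.atTop (nhds 0) := by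
  have := ((aux_phi a h0 h1).comp tendsto_inv_atTop_nhdsGT_zero).div_const (2*a+1)
  rw [zero_div] at this
  refine this.congr' ?_
  filter_upwards [Filter.eventually_gt_atTop 1] with u hu
  have hv : 0 < u - 1 := by linarith
  have hu0 : 0 < u := by linarith
  have e : 1 - u⁻¹ = (u-1)/u := by field_simp
  simp only [Function.comp]
  rw [e, div_rpow hv.le hu0.le, div_rpow hv.le hu0.le, inv_rpow hu0.le]
  have e2 : u^(2*a+1) = u^a * u^a * u := by
    rw [rpow_add hu0, rpow_one, ← rpow_add hu0]; ring_nf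
  have e3 : u^(a-1) = u^a / u := by rw [rpow_sub hu0, rpow_one]
  have e4 : u^(a+1) = u^a * u := by rw [rpow_add hu0, rpow_one]
  rw [e2, e3, e4]
  have : u^a ≠ 0 := by positivity
  congr 1
  field_simp
  ring

lemma aux_gamma (a : ℝ) (h0 : -(1/2) < a) (h1 : a < 1/2) :
    Real.Gamma (1-2*a) * Real.Gamma (2*a+1) * Real.cos (π*a) = Real.Gamma (a+1) * Real.Gamma (1-a) := by
  rcases eq_or_ne a 0 with rfl | ha
  · simp
  have r1 := Real.Gamma_mul_Gamma_one_sub a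
  have r2 := Real.Gamma_mul_Gamma_one_sub (2*a)
  rw [Real.Gamma_add_one ha, Real.Gamma_add_one (by simpa using ha)]
  have e : π * (2*a) = 2*(π*a) := by ring
  rw [e, Real.sin_two_mul] at r2
  have hc : 0 < Real.cos (π*a) := Real.cos_pos_of_mem_Ioo ⟨by nlinarith [pi_pos], by nlinarith [pi_pos]⟩
  have hs : Real.sin (π*a) ≠ 0 := by
    intro h
    have := (Real.sin_eq_zero_iff_of_lt_of_lt (by nlinarith [pi_pos]) (by nlinarith [pi_pos])).1 h
    simp [pi_ne_zero, ha] at this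
  calc _ = 2*a*(Real.Gamma (2*a) * Real.Gamma (1-2*a)) * Real.cos (π*a) := by ring
    _ = a * (Real.Gamma a * Real.Gamma (1-a)) := by
      rw [r1, r2]
      generalize Real.cos (π*a) = c at *
      generalize Real.sin (π*a) = s at *
      field_simp
    _ = _ := by ring

lemma aux_main (a : ℝ) (h0 : -(1/2) < a) (h1 : a < 1/2) :
    ∫ u in Ioi (1:ℝ), (u ^ a - (u - 1) ^ a)^2 =
      (1-a)/(2*a+1) * (Real.Gamma (a+1) * Real.Gamma (1-2*a) / Real.Gamma (2 - a)) - 1/(2*a+1) := by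
  obtain ⟨hi, hI⟩ := aux_int a h0 h1
  set B : ℝ → ℝ := fun t => ∫ x in (0:ℝ)..t, x ^ a * (1 - x) ^ (-2*a) with hB
  have hBc : ContinuousOn B (Icc 0 1) := by
    have := intervalIntegral.continuousOn_primitive_interval' hi (a := 0) (by simp)
    rwa [uIcc_of_le zero_le_one] at this
  have hBd : ∀ t ∈ Ioo (0:ℝ) 1, HasDerivAt B (t ^ a * (1 - t) ^ (-2*a)) t := by
    intro t ht
    have hct : ∀ t ∈ Ioo (0:ℝ) 1, ContinuousAt (fun x : ℝ => x ^ a * (1 - x) ^ (-2*a)) t := by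
      intro t ht
      have n1 : t ≠ 0 := ht.1.ne'
      have n2 : 1 - t ≠ 0 := by linarith [ht.2]
      exact (continuousAt_id.rpow_const (Or.inl n1)).mul
        ((continuousAt_const.sub continuousAt_id).rpow_const (Or.inl n2))
    refine intervalIntegral.integral_hasDerivAt_right (hi.mono_set ?_) ?_ (hct t ht)
    · rw [uIcc_of_le zero_le_one, uIcc_of_le ht.1.le]
      exact Icc_subset_Icc_right ht.2.le
    · exact ContinuousAt.stronglyMeasurableAtFilter isOpen_Ioo hct t ht
  set G := (fun u : ℝ => ((u-1)^(2*a+1) + u^(2*a+1) - 2*((u-1)^(a+1) * u^a)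
        - (u-1)^(a+1) * u^(a-1)) / (2*a+1)) with hG
  have hinvc : ContinuousWithinAt (fun u : ℝ => 1 - u⁻¹) (Ici 1) 1 :=
    (continuousAt_const.sub (continuousAt_inv₀ one_ne_zero)).continuousWithinAt
  have hmaps : MapsTo (fun u : ℝ => 1 - u⁻¹) (Ici 1) (Icc 0 1) := by
    intro u hu
    have hu' : (1:ℝ) ≤ u := hu
    have := inv_le_one_of_one_le₀ hu'
    have : 0 < u⁻¹ := by positivity
    constructor <;> simp only [] <;> linarith
  rw [integral_Ioi_of_hasDerivAt_of_nonneg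
    (g := fun u => G u + (1-a)/(2*a+1) * B (1 - u⁻¹))
    (l := 0 + (1-a)/(2*a+1) * B 1)]
  · have g1 : G 1 = 1/(2*a+1) := by
      simp only [hG, sub_self, one_rpow]
      rw [zero_rpow (by linarith), zero_rpow (by linarith)]
      norm_num
    have b0 : B (1 - 1⁻¹) = 0 := by simp [hB]
    have b1 : B 1 = _ := hI
    rw [g1, b0, b1]; ring
  · refine ContinuousWithinAt.add ?_ (ContinuousWithinAt.mul continuousWithinAt_const ?_)
    · have c1 : ∀ p : ℝ, 0 < p → ContinuousAt (fun u : ℝ => (u-1)^p) 1 := fun p hp =>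
        (continuousAt_id.sub continuousAt_const).rpow_const (Or.inr hp.le)
      have c2 : ∀ p : ℝ, ContinuousAt (fun u : ℝ => u^p) 1 := fun p =>
        continuousAt_id.rpow_const (Or.inl one_ne_zero)
      exact (((((c1 _ (by linarith)).add (c2 _)).sub (continuousAt_const.mul
        ((c1 _ (by linarith)).mul (c2 _)))).sub ((c1 _ (by linarith)).mul (c2 _))).div_const _).continuousWithinAt
    · exact ContinuousWithinAt.comp (t := Icc 0 1) (hBc _ (by simp)) hinvc hmaps
  · intro u hu
    have hu : 1 < u := hu
    have hv : 0 < u - 1 := by linarith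
    have hu0 : 0 < u := by linarith
    have hlt := inv_lt_one_of_one_lt₀ hu
    have hpos : 0 < u⁻¹ := by positivity
    have di : HasDerivAt (fun u : ℝ => 1 - u⁻¹) (-(-(u^2)⁻¹)) u :=
      (hasDerivAt_inv hu0.ne').const_sub 1
    have dB := (hBd (1 - u⁻¹) ⟨by linarith, by linarith⟩).comp u di
    refine ((aux_deriv a u h0 hu).add (dB.const_mul ((1-a)/(2*a+1)))).congr_deriv ?_
    have e : 1 - u⁻¹ = (u-1)/u := by field_simp
    have e4 : u^(a-2) = u^a / u^2 := by rw [rpow_sub hu0]; norm_cast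
    have e5 : (u⁻¹)^(-2*a) = u^a * u^a := by
      rw [inv_rpow hu0.le, ← rpow_neg hu0.le, ← rpow_add hu0]; ring_nf
    rw [sub_sub_cancel, e5, e, div_rpow hv.le hu0.le, e4]
    have : u^a ≠ 0 := by positivity
    field_simp
    ring
  · intro u hu; positivity
  · refine (aux_lim a h0 h1).add (Filter.Tendsto.const_mul _ ?_)
    have t1 : Filter.Tendsto (fun u : ℝ => 1 - u⁻¹) Filter.atTop (nhdsWithin 1 (Icc 0 1)) := by
      refine tendsto_nhdsWithin_iff.2 ⟨?_, ?_⟩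
      · simpa using tendsto_inv_atTop_zero.const_sub (1:ℝ)
      · filter_upwards [Filter.eventually_ge_atTop 1] with u hu using hmaps hu
    exact (hBc 1 (by simp)).tendsto.comp t1

theorem VH_identity (H : ℝ) (hH0 : 0 < H) (hH1 : H < 1) :
    1/(2*H) + ∫ u in Ioi (1:ℝ), (u ^ (H - 1/2) - (u - 1) ^ (H - 1/2))^2 =
      Real.Gamma (H + 1/2)^2 / (2*H * Real.sin (π*H) * Real.Gamma (2*H)) := by
  obtain ⟨a, rfl⟩ : ∃ a, H = a + 1/2 := ⟨H - 1/2, by ring⟩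
  have h0 : -(1/2) < a := by linarith
  have h1 : a < 1/2 := by linarith
  have es : Real.sin (π * (a + 1/2)) = Real.cos (π*a) := by
    rw [← Real.sin_add_pi_div_two]; ring_nf
  have e1 : a + 1/2 - 1/2 = a := by ring
  have e2 : 2*(a+1/2) = 2*a+1 := by ring
  have e3 : a + 1/2 + 1/2 = a + 1 := by ring
  rw [es, e1, e2, e3, aux_main a h0 h1]
  have hc : 0 < Real.cos (π*a) := Real.cos_pos_of_mem_Ioo ⟨by nlinarith [pi_pos], by nlinarith [pi_pos]⟩
  have g := aux_gamma a h0 h1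
  have g2 : Real.Gamma (2 - a) = (1-a) * Real.Gamma (1-a) := by
    rw [← Real.Gamma_add_one (by linarith)]; ring_nf
  have p1 := Real.Gamma_pos_of_pos (s := 1-a) (by linarith)
  have p2 := Real.Gamma_pos_of_pos (s := 2*a+1) (by linarith)
  have n1 : 1 - a ≠ 0 := by linarith
  have n2 : 2*a+1 ≠ 0 := by linarith
  rw [g2, add_sub_cancel]
  have : (1-a)/(2*a+1) * (Real.Gamma (a+1) * Real.Gamma (1-2*a) / ((1-a) * Real.Gamma (1-a)))
    = Real.Gamma (a+1) * Real.Gamma (1-2*a) / ((2*a+1) * Real.Gamma (1-a)) := by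
    field_simp
  rw [this, div_eq_div_iff (by positivity) (by positivity)]
  linear_combination Real.Gamma (a+1) * (2*a+1) * g
end

section
/- For H in (0,1), define J(H) = ∫₀^∞ ((u+1)^(H-1/2) - u^(H-1/2))² du. Then J(H) is finite and J(H) + 1/(2H) = Γ(H+1/2)² / (2H sin(πH) Γ(2H)). -/
open Real MeasureTheory Set

/-- The boundary term (times `2H = 2a+1`). -/
noncomputable def PP (a u : ℝ) : ℝ :=
  (u+1) ^ (2*a+1) + u ^ (2*a+1) - 2 * (u ^ (a+1) * (u+1) ^ a) - u ^ (a+1) * (u+1) ^ (a-1)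

/-- The incomplete beta integral. -/
noncomputable def BB (a x : ℝ) : ℝ := ∫ t in (0:ℝ)..x, t ^ a * (1 - t) ^ (-(2*a))

lemma BB_int (a : ℝ) (h1 : -(1/2) < a) (h2 : a < 1/2) :
    IntervalIntegrable (fun t : ℝ => t ^ a * (1 - t) ^ (-(2*a))) volume 0 1 := by
  have h := Complex.betaIntegral_convergent (u := ((a+1 : ℝ) : ℂ)) (v := ((1-2*a : ℝ) : ℂ))
    (by rw [Complex.ofReal_re]; linarith) (by rw [Complex.ofReal_re]; linarith)
  rw [intervalIntegrable_iff_integrableOn_Ioc_of_le zero_le_one] at h ⊢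
  refine IntegrableOn.congr_fun (Integrable.re h) ?_ measurableSet_Ioc
  intro t ht
  have e1 : ((a+1 : ℝ) : ℂ) - 1 = ((a : ℝ) : ℂ) := by push_cast; ring
  have e2 : ((1-2*a : ℝ) : ℂ) - 1 = ((-(2*a) : ℝ) : ℂ) := by push_cast; ring
  have e3 : (1 - (t:ℂ)) = ((1 - t : ℝ) : ℂ) := by push_cast; ring
  simp only [e1, e2, e3]
  rw [← Complex.ofReal_cpow ht.1.le, ← Complex.ofReal_cpow (by linarith [ht.2]),
    ← Complex.ofReal_mul]
  simp

lemma BB_one (a : ℝ) (h1 : -(1/2) < a) (h2 : a < 1/2) :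
    BB a 1 = Real.Gamma (a+1) * Real.Gamma (1-2*a) / Real.Gamma (2-a) := by
  have h := Complex.betaIntegral_eq_Gamma_mul_div ((a+1 : ℝ) : ℂ) ((1-2*a : ℝ) : ℂ)
    (by rw [Complex.ofReal_re]; linarith) (by rw [Complex.ofReal_re]; linarith)
  have h' : Complex.betaIntegral ((a+1 : ℝ) : ℂ) ((1-2*a : ℝ) : ℂ) = ((BB a 1 : ℝ) : ℂ) := by
    unfold Complex.betaIntegral BB
    rw [← intervalIntegral.integral_ofReal]
    apply intervalIntegral.integral_congr
    intro t ht
    rw [uIcc_of_le zero_le_one] at ht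
    have e1 : ((a+1 : ℝ) : ℂ) - 1 = ((a : ℝ) : ℂ) := by push_cast; ring
    have e2 : ((1-2*a : ℝ) : ℂ) - 1 = ((-(2*a) : ℝ) : ℂ) := by push_cast; ring
    have e3 : (1 - (t:ℂ)) = ((1 - t : ℝ) : ℂ) := by push_cast; ring
    simp only [e1, e2, e3]
    rw [← Complex.ofReal_cpow ht.1, ← Complex.ofReal_cpow (by linarith [ht.2]),
      ← Complex.ofReal_mul]
  rw [h', ← Complex.ofReal_add, Complex.Gamma_ofReal, Complex.Gamma_ofReal,
    Complex.Gamma_ofReal] at h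
  have e : a + 1 + (1 - 2*a) = 2 - a := by ring
  rw [e] at h
  exact_mod_cast h

lemma BB_cont (a : ℝ) (h1 : -(1/2) < a) (h2 : a < 1/2) : ContinuousOn (BB a) (Icc 0 1) := by
  have := intervalIntegral.continuousOn_primitive_interval' (BB_int a h1 h2)
    (left_mem_uIcc)
  rwa [uIcc_of_le zero_le_one] at this

lemma BB_deriv (a : ℝ) (h1 : -(1/2) < a) (h2 : a < 1/2) (x : ℝ) (hx : x ∈ Ioo (0:ℝ) 1) :
    HasDerivAt (BB a) (x ^ a * (1 - x) ^ (-(2*a))) x := by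
  have hc : ∀ y ∈ Ioo (0:ℝ) 1, ContinuousAt (fun t : ℝ => t ^ a * (1 - t) ^ (-(2*a))) y := by
    intro y hy
    have h1 : y ≠ 0 := hy.1.ne'
    have h2 : 1 - y ≠ 0 := by linarith [hy.2]
    exact (continuousAt_id.rpow_const (Or.inl h1)).mul
      ((continuousAt_const.sub continuousAt_id).rpow_const (Or.inl h2))
  refine intervalIntegral.integral_hasDerivAt_right ?_ ?_ (hc x hx)
  · refine (BB_int a h1 h2).mono_set ?_
    rw [uIcc_of_le zero_le_one, uIcc_of_le hx.1.le]
    exact Icc_subset_Icc_right hx.2.le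
  · exact ContinuousAt.stronglyMeasurableAtFilter isOpen_Ioo hc x hx

lemma BB_comp (a : ℝ) (h1 : -(1/2) < a) (h2 : a < 1/2) (u : ℝ) (hu : 0 < u) :
    HasDerivAt (fun u => BB a (u / (u+1))) (u ^ a * (u+1) ^ a / (u+1)^2) u := by
  have hp : 0 < u + 1 := by linarith
  have hd : HasDerivAt (fun u : ℝ => u / (u+1)) (1 / (u+1)^2) u := by
    convert! (hasDerivAt_id u).div ((hasDerivAt_id u).add_const 1) hp.ne' using 1
    simp
  have := (BB_deriv a h1 h2 (u/(u+1)) ⟨by positivity, by rw [div_lt_one hp]; linarith⟩).comp u hd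
  convert! this using 1
  have e : 1 - u/(u+1) = (u+1)⁻¹ := by field_simp; ring
  rw [e, Real.div_rpow hu.le hp.le, Real.inv_rpow hp.le, Real.rpow_neg hp.le, two_mul,
    Real.rpow_add hp]
  have := Real.rpow_pos_of_pos hp a
  field_simp

lemma PP_deriv (a : ℝ) (u : ℝ) (hu : 0 < u) :
    HasDerivAt (PP a) ((2*a+1) * ((u+1)^a - u^a)^2 - (1-a) * (u ^ a * (u+1) ^ a / (u+1)^2)) u := by
  have hp : 0 < u + 1 := by linarith
  have hA : ∀ p : ℝ, HasDerivAt (fun u : ℝ => (u+1)^p) (p * (u+1)^(p-1)) u := by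
    intro p
    have := ((hasDerivAt_id u).add_const 1).rpow_const (p := p) (Or.inl hp.ne')
    convert! this using 1
    simp
  have hU : ∀ p : ℝ, HasDerivAt (fun u : ℝ => u^p) (p * u^(p-1)) u := fun p =>
    Real.hasDerivAt_rpow_const (Or.inl hu.ne')
  have := (((hA (2*a+1)).add (hU (2*a+1))).sub (((hU (a+1)).mul (hA a)).const_mul 2)).sub
    ((hU (a+1)).mul (hA (a-1)))
  convert! this using 1
  have e1 : 2*a+1-1 = a + a := by ring
  have e2 : a+1-1 = a := by ring
  rw [e1, e2]
  simp only [Real.rpow_add hp, Real.rpow_add hu, Real.rpow_sub hp, Real.rpow_one]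
  field_simp
  ring

lemma PP_cont (a : ℝ) (h1 : -(1/2) < a) : ContinuousAt (PP a) 0 := by
  have hA : ∀ p : ℝ, ContinuousAt (fun u : ℝ => (u+1)^p) 0 := fun p =>
    (continuousAt_id.add continuousAt_const).rpow_const (Or.inl (by simp))
  have hU : ∀ p : ℝ, 0 ≤ p → ContinuousAt (fun u : ℝ => u^p) 0 := fun p hp =>
    continuousAt_id.rpow_const (Or.inr hp)
  exact (((hA _).add (hU _ (by linarith))).sub
    (continuousAt_const.mul ((hU _ (by linarith)).mul (hA _)))).sub
    ((hU _ (by linarith)).mul (hA _))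

lemma PP_zero (a : ℝ) (h1 : -(1/2) < a) : PP a 0 = 1 := by
  unfold PP
  rw [Real.zero_rpow (by linarith : 2*a+1 ≠ 0), Real.zero_rpow (by linarith : a+1 ≠ 0)]
  simp

open Filter Topology in
lemma PP_lim (a : ℝ) (h2 : a < 1/2) : Tendsto (PP a) atTop (𝓝 0) := by
  have hd : HasDerivAt (fun x : ℝ => (1+x)^a) a 0 := by
    have := ((hasDerivAt_id (0:ℝ)).const_add 1).rpow_const (p := a) (Or.inl (by simp))
    convert! this using 1
    simp
  have hinv : Tendsto (fun u : ℝ => u⁻¹) atTop (𝓝[>] 0) := tendsto_inv_atTop_nhdsGT_zero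
  have hinv0 : Tendsto (fun u : ℝ => u⁻¹) atTop (𝓝 0) := tendsto_inv_atTop_zero
  have hs := hd.tendsto_slope_zero_right.comp hinv
  have hw : Tendsto (fun u : ℝ => (1+u⁻¹)^a) atTop (𝓝 1) := by
    have := hd.continuousAt.tendsto.comp hinv0
    simpa [Function.comp_def] using this
  have hz : Tendsto (fun u : ℝ => u ^ (-(1-2*a))) atTop (𝓝 0) :=
    tendsto_rpow_neg_atTop (by linarith)
  have hx : Tendsto (fun u : ℝ => (1+u⁻¹)⁻¹) atTop (𝓝 1) := by
    have := (hinv0.const_add 1).inv₀ (by simp)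
    simpa using this
  have hs' : Tendsto (fun u : ℝ => u * ((1+u⁻¹)^a - 1)) atTop (𝓝 a) := by
    simpa [Function.comp_def] using hs
  have key := hz.mul (((hs'.pow 2).add (hw.mul hs')).add (hw.mul hx))
  rw [zero_mul] at key
  refine key.congr' ?_
  filter_upwards [eventually_gt_atTop 0] with u hu
  have hp : 0 < u + 1 := by linarith
  have e : 1 + u⁻¹ = (u+1)/u := by field_simp
  have e2 : -(1-2*a) = a + a - 1 := by ring
  unfold PP
  rw [e, e2, two_mul, Real.div_rpow hp.le hu.le]
  simp only [Real.rpow_add hp, Real.rpow_add hu, Real.rpow_sub hp, Real.rpow_sub hu, Real.rpow_one]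
  have := Real.rpow_pos_of_pos hp a
  have := Real.rpow_pos_of_pos hu a
  field_simp
  ring

open Filter Topology in
lemma main_aux (a : ℝ) (h1 : -(1/2) < a) (h2 : a < 1/2) :
    IntegrableOn (fun u : ℝ => ((u+1) ^ a - u ^ a)^2) (Ioi 0) ∧
    (∫ u in Ioi (0:ℝ), ((u+1) ^ a - u ^ a)^2) = ((1-a) * BB a 1 - 1) / (2*a+1) := by
  have hH : 0 < 2*a+1 := by linarith
  let Q : ℝ → ℝ := fun u => (PP a u + (1-a) * BB a (u/(u+1))) / (2*a+1)
  have hQd : ∀ u ∈ Ioi (0:ℝ), HasDerivAt Q (((u+1) ^ a - u ^ a)^2) u := by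
    intro u hu
    have := ((PP_deriv a u hu).add ((BB_comp a h1 h2 u hu).const_mul (1-a))).div_const (2*a+1)
    convert! this using 1
    field_simp
    ring
  have hmaps : MapsTo (fun u : ℝ => u/(u+1)) (Ici 0) (Icc 0 1) := by
    intro u hu
    have hu : 0 ≤ u := hu
    exact ⟨by positivity, by rw [div_le_one (by linarith)]; linarith⟩
  have hQc : ContinuousWithinAt Q (Ici 0) 0 := by
    have hc : ContinuousWithinAt (fun u : ℝ => u/(u+1)) (Ici 0) 0 :=
      (continuousAt_id.div (continuousAt_id.add continuousAt_const)
        (by simp)).continuousWithinAt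
    have hb : ContinuousWithinAt (BB a) (Icc 0 1) ((0:ℝ)/(0+1)) :=
      BB_cont a h1 h2 _ (by simp)
    have := ContinuousWithinAt.comp (f := fun u : ℝ => u/(u+1)) (x := 0) hb hc hmaps
    exact (((PP_cont a h1).continuousWithinAt).add (continuousWithinAt_const.mul this)).div_const _
  have hQl : Tendsto Q atTop (𝓝 ((0 + (1-a) * BB a 1)/(2*a+1))) := by
    refine ((PP_lim a h2).add (Tendsto.const_mul _ ?_)).div_const _
    have hb : Tendsto (BB a) (𝓝[Icc 0 1] 1) (𝓝 (BB a 1)) := BB_cont a h1 h2 1 (by simp)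
    refine hb.comp (tendsto_nhdsWithin_iff.2 ⟨?_, ?_⟩)
    · have := ((tendsto_inv_atTop_zero (𝕜 := ℝ)).const_add 1).inv₀ (by simp)
      simp only [add_zero, inv_one] at this
      refine this.congr' ?_
      filter_upwards [eventually_gt_atTop 0] with u hu
      field_simp
    · filter_upwards [eventually_ge_atTop 0] with u hu using hmaps hu
  refine ⟨integrableOn_Ioi_deriv_of_nonneg hQc hQd (fun _ _ => sq_nonneg _) hQl, ?_⟩
  rw [integral_Ioi_of_hasDerivAt_of_nonneg hQc hQd (fun _ _ => sq_nonneg _) hQl]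
  have : Q 0 = 1 / (2*a+1) := by
    simp [Q, PP_zero a h1, BB]
  rw [this]
  ring

lemma gamma_aux (H : ℝ) (hH0 : 0 < H) (hH1 : H < 1) :
    (3/2 - H) * (Real.Gamma (H + 1/2) * Real.Gamma (2 - 2*H) / Real.Gamma (5/2 - H)) =
      Real.Gamma (H + 1/2)^2 / (Real.sin (π*H) * Real.Gamma (2*H)) := by
  have hs : 0 < Real.sin (π*H) := Real.sin_pos_of_pos_of_lt_pi (by positivity)
    (by nlinarith [Real.pi_pos])
  have g1 : Real.Gamma (5/2 - H) = (3/2 - H) * Real.Gamma (3/2 - H) := by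
    rw [← Real.Gamma_add_one (by linarith)]; congr 1; ring
  have d1 := Real.Gamma_mul_Gamma_add_half H
  have d2 := Real.Gamma_mul_Gamma_add_half (1 - H)
  have r := Real.Gamma_mul_Gamma_one_sub H
  have e1 : 1 - H + 1/2 = 3/2 - H := by ring
  have e2 : 2 * (1 - H) = 2 - 2*H := by ring
  have e3 : 1 - (2 - 2*H) = -(1 - 2*H) := by ring
  rw [e1, e2, e3, Real.rpow_neg (by norm_num)] at d2
  rw [g1]
  have p1 := Real.Gamma_pos_of_pos (show 0 < H by linarith)
  have p2 := Real.Gamma_pos_of_pos (show 0 < 1 - H by linarith)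
  have p3 := Real.Gamma_pos_of_pos (show 0 < H + 1/2 by linarith)
  have p4 := Real.Gamma_pos_of_pos (show 0 < 3/2 - H by linarith)
  have p5 := Real.Gamma_pos_of_pos (show 0 < 2*H by linarith)
  have p6 := Real.Gamma_pos_of_pos (show 0 < 2 - 2*H by linarith)
  have p7 : 0 < 3/2 - H := by linarith
  have p8 : (0:ℝ) < 2 ^ (1 - 2*H) := by positivity
  have hpi : √π * √π = π := Real.mul_self_sqrt Real.pi_pos.le
  have key : Real.Gamma (2 - 2*H) * Real.sin (π*H) * Real.Gamma (2*H) =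
      Real.Gamma (H + 1/2) * Real.Gamma (3/2 - H) := by
    generalize Real.Gamma (2 - 2*H) = A at *
    generalize Real.Gamma (2*H) = B at *
    generalize Real.Gamma (H + 1/2) = C at *
    generalize Real.Gamma (3/2 - H) = D at *
    generalize Real.Gamma H = E at *
    generalize Real.Gamma (1 - H) = F at *
    generalize Real.sin (π*H) = S at *
    generalize (2:ℝ) ^ (1 - 2*H) = T at *
    have r' : E * F * S = π := by rw [r]; field_simp
    have m : (E * C) * (F * D) = A * B * π := by
      rw [d1, d2]
      calc B * T * √π * (A * T⁻¹ * √π) = A * B * (T * T⁻¹) * (√π * √π) := by ring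
        _ = A * B * π := by rw [hpi, mul_inv_cancel₀ p8.ne', mul_one]
    have hEF : E * F ≠ 0 := by positivity
    apply mul_left_cancel₀ hEF
    calc E * F * (A * S * B) = A * B * (E * F * S) := by ring
      _ = (E * C) * (F * D) := by rw [r', m]
      _ = _ := by ring
  have : (3/2 - H) * (Real.Gamma (H + 1/2) * Real.Gamma (2 - 2*H) /
      ((3/2 - H) * Real.Gamma (3/2 - H))) =
      Real.Gamma (H + 1/2) * Real.Gamma (2 - 2*H) / Real.Gamma (3/2 - H) := by
    generalize 3/2 - H = q at *
    field_simp
  rw [this, div_eq_div_iff p4.ne' (by positivity)]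
  linear_combination Real.Gamma (H + 1/2) * key

theorem J_finite_and_identity (H : ℝ) (hH0 : 0 < H) (hH1 : H < 1) :
    IntegrableOn (fun u : ℝ => ((u+1) ^ (H - 1/2) - u ^ (H - 1/2))^2) (Ioi 0) ∧
    (∫ u in Ioi (0:ℝ), ((u+1) ^ (H - 1/2) - u ^ (H - 1/2))^2) + 1/(2*H) =
      Real.Gamma (H + 1/2)^2 / (2*H * Real.sin (π*H) * Real.Gamma (2*H)) := by
  have h1 : -(1/2) < H - 1/2 := by linarith
  have h2 : H - 1/2 < 1/2 := by linarith
  obtain ⟨hi, he⟩ := main_aux (H - 1/2) h1 h2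
  refine ⟨hi, ?_⟩
  rw [he, BB_one _ h1 h2]
  have e1 : H - 1/2 + 1 = H + 1/2 := by ring
  have e2 : 1 - 2 * (H - 1/2) = 2 - 2*H := by ring
  have e3 : 2 - (H - 1/2) = 5/2 - H := by ring
  have e4 : 1 - (H - 1/2) = 3/2 - H := by ring
  have e5 : 2 * (H - 1/2) + 1 = 2*H := by ring
  rw [e1, e2, e3, e4, e5, gamma_aux H hH0 hH1, ← add_div, sub_add_cancel, div_div]
  congr 1
  ring
end
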